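/- arXiv:0906.2450 — 6 statements merged into one kernel-verified Lean document; each statement's English description precedes it below -/
import Mathlib

section
/- For every nonnegative integer n, there exist integers x, y, z such that n = p_5(x) + p_5(y) + 3·p_5(z), where p_5(x) = (3x² − x)/2. In other words, the sum p_5 + p_5 + 3p_5 is universal over ℤ. -/
/-- Generalized pentagonal number: `p₅(x) = (3x² − x)/2`. -/
def p5 (x : ℤ) : ℤ := (3 * x ^ 2 - x) / 2

lemma lt_aux (a b F A : ℤ) (ha : 2 ≤ a) (hab : a * b = F ^ 2 + A) (hF : 4 * F ^ 2 ≤ a ^ 2)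
    (hA0 : 0 < A) (hA : A ^ 2 ≤ 4 * a) : b < a := by
  by_contra hc
  push Not at hc
  have h0 : a * a ≤ a * b := by gcongr
  have h4 : 3 * a ^ 2 ≤ 4 * A := by linarith [sq a]
  have h5 : 6 * a ≤ 4 * A := by nlinarith
  have h6 : (3 * a ^ 2) * (6 * a) ≤ (4 * A) * (4 * A) := by gcongr
  have h7 : 4 ≤ a ^ 2 := by nlinarith
  have h8 : 4 * a ≤ a ^ 2 * a := by gcongr
  linarith [sq A]

lemma round_exists (a t : ℤ) (ha : 0 < a) : ∃ k : ℤ, 4 * (t + k * a) ^ 2 ≤ a ^ 2 := by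
  refine ⟨-((2 * t + a) / (2 * a)), ?_⟩
  have h1 := Int.emod_add_mul_ediv (2 * t + a) (2 * a)
  have h2 := Int.emod_nonneg (2 * t + a) (b := 2 * a) (by omega)
  have h3 := Int.emod_lt_of_pos (2 * t + a) (b := 2 * a) (by omega)
  set q := (2 * t + a) / (2 * a)
  set e := (2 * t + a) % (2 * a)
  have h4 : 2 * (t + -q * a) = e - a := by linarith
  have h5 : 4 * (t + -q * a) ^ 2 = (e - a) ^ 2 := by rw [← h4]; ring
  rw [h5]
  nlinarith

/-- Reduction of positive definite binary forms. -/
lemma bin_red (N : ℕ) : ∀ A B C D : ℤ, 0 < A → A ≤ N → A * C - B ^ 2 = D → 0 < D →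
    ∃ p q r s : ℤ, p * s - q * r = 1 ∧ 0 < A * p ^ 2 + 2 * B * p * r + C * r ^ 2 ∧
      3 * (A * p ^ 2 + 2 * B * p * r + C * r ^ 2) ^ 2 ≤ 4 * D := by
  induction N with
  | zero => intro A B C D h1 h2; push_cast at h2; omega
  | succ N ih =>
    intro A B C D hA hN hD hD0
    by_cases h : 3 * A ^ 2 ≤ 4 * D
    · exact ⟨1, 0, 0, 1, by norm_num, by simpa using hA, by simpa using h⟩
    push Not at h
    obtain ⟨k, hk⟩ := round_exists A B hA
    have e1 : A * (A * k ^ 2 + 2 * B * k + C) = D + (B + k * A) ^ 2 := by rw [← hD]; ring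
    have hC0 : 0 < A * k ^ 2 + 2 * B * k + C := by
      by_contra hc
      push Not at hc
      nlinarith [sq_nonneg (B + k * A)]
    have hC1 : A * k ^ 2 + 2 * B * k + C < A := by
      by_contra hc
      push Not at hc
      nlinarith
    obtain ⟨p, q, r, s, g1, g2, g3⟩ := ih (A * k ^ 2 + 2 * B * k + C) (-(A * k + B)) A D hC0
      (by push_cast at hN; omega) (by rw [← hD]; ring) hD0
    have e2 : A * (k * p - r) ^ 2 + 2 * B * (k * p - r) * p + C * p ^ 2 =
      (A * k ^ 2 + 2 * B * k + C) * p ^ 2 + 2 * (-(A * k + B)) * p * r + A * r ^ 2 := by ring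
    refine ⟨k * p - r, k * q - s, p, q, by linarith, ?_, ?_⟩
    · rw [e2]; exact g2
    · rw [e2]; exact g3

lemma bin_red' (A B C D : ℤ) (hA : 0 < A) (hD : A * C - B ^ 2 = D) (h : 0 < D) :
    ∃ p q r s : ℤ, p * s - q * r = 1 ∧ 0 < A * p ^ 2 + 2 * B * p * r + C * r ^ 2 ∧
      3 * (A * p ^ 2 + 2 * B * p * r + C * r ^ 2) ^ 2 ≤ 4 * D :=
  bin_red A.toNat A B C D hA (by omega) hD h

/-- A binary form of determinant 3. -/
lemma bin_three (A B C y z : ℤ) (hA : 0 < A) (hD : A * C - B ^ 2 = 3) :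
    (∃ Y Z : ℤ, A * y ^ 2 + 2 * B * y * z + C * z ^ 2 = Y ^ 2 + 3 * Z ^ 2) ∨
    (∃ Y Z : ℤ, A * y ^ 2 + 2 * B * y * z + C * z ^ 2 = 2 * (Y ^ 2 + Y * Z + Z ^ 2)) := by
  obtain ⟨p, q, r, s, h1, h2, h3⟩ := bin_red' A B C 3 hA hD (by norm_num)
  obtain ⟨A', hA'⟩ : ∃ A', A' = A * p ^ 2 + 2 * B * p * r + C * r ^ 2 := ⟨_, rfl⟩
  obtain ⟨B', hB'⟩ : ∃ B', B' = A * p * q + B * (p * s + q * r) + C * r * s := ⟨_, rfl⟩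
  obtain ⟨C', hC'⟩ : ∃ C', C' = A * q ^ 2 + 2 * B * q * s + C * s ^ 2 := ⟨_, rfl⟩
  obtain ⟨Y, hY⟩ : ∃ Y, Y = s * y - q * z := ⟨_, rfl⟩
  obtain ⟨Z, hZ⟩ : ∃ Z, Z = p * z - r * y := ⟨_, rfl⟩
  have hy : y = p * Y + q * Z := by rw [hY, hZ]; linear_combination (-y) * h1
  have hz : z = r * Y + s * Z := by rw [hY, hZ]; linear_combination (-z) * h1
  have hG : A * y ^ 2 + 2 * B * y * z + C * z ^ 2 =
      A' * Y ^ 2 + 2 * B' * Y * Z + C' * Z ^ 2 := by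
    rw [hy, hz, hA', hB', hC']; ring
  have hdet : A' * C' - B' ^ 2 = 3 := by
    have : A' * C' - B' ^ 2 = (A * C - B ^ 2) * (p * s - q * r) ^ 2 := by
      rw [hA', hB', hC']; ring
    rw [this, hD, h1]; norm_num
  rw [hG]
  rw [← hA'] at h2 h3
  have : A' ≤ 2 := by nlinarith
  have h12 : A' = 1 ∨ A' = 2 := by omega
  rcases h12 with h | h
  · left
    refine ⟨Y + B' * Z, Z, ?_⟩
    rw [h] at hdet ⊢
    linear_combination (Z ^ 2) * hdet
  · right
    rw [h] at hdet ⊢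
    rcases Int.even_or_odd' B' with ⟨k, hk | hk⟩
    · rw [hk] at hdet
      exfalso
      have : 2 * C' - 2 * (2 * k ^ 2) = 3 := by linarith
      omega
    · refine ⟨Y + k * Z, Z, ?_⟩
      rw [hk] at hdet ⊢
      have : C' = 2 * k ^ 2 + 2 * k + 2 := by linarith
      rw [this]; ring

/-- Reduction of positive definite ternary forms of determinant 3. -/
lemma tern_red (m : ℤ) (N : ℕ) : ∀ a b c d e f x y z : ℤ, 0 < a → a ≤ N → 0 < a * b - f ^ 2 →
    a * b * c + 2 * d * e * f - a * d ^ 2 - b * e ^ 2 - c * f ^ 2 = 3 →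
    a * x ^ 2 + b * y ^ 2 + c * z ^ 2 + 2 * d * y * z + 2 * e * x * z + 2 * f * x * y = m →
    (∃ X Y Z : ℤ, m = X ^ 2 + Y ^ 2 + 3 * Z ^ 2) ∨
    (∃ X Y Z : ℤ, m = X ^ 2 + 2 * (Y ^ 2 + Y * Z + Z ^ 2)) := by
  induction N with
  | zero => intro a b c d e f x y z h1 h2; push_cast at h2; omega
  | succ N ih =>
    intro a b c d e f x y z ha hN hA hdet hm
    have hAC : (a * b - f ^ 2) * (a * c - e ^ 2) - (a * d - e * f) ^ 2 = 3 * a := by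
      linear_combination a * hdet
    by_cases h1 : a = 1
    · subst h1
      have hm' : m = (x + f * y + e * z) ^ 2 + ((1 * b - f ^ 2) * y ^ 2 +
        2 * (1 * d - e * f) * y * z + (1 * c - e ^ 2) * z ^ 2) := by rw [← hm]; ring
      rcases bin_three _ (1 * d - e * f) (1 * c - e ^ 2) y z hA (by linarith) with ⟨Y, Z, h⟩ | ⟨Y, Z, h⟩
      · left
        exact ⟨x + f * y + e * z, Y, Z, by rw [hm', h]; ring⟩
      · right
        exact ⟨x + f * y + e * z, Y, Z, by rw [hm', h]⟩
    obtain ⟨p, q, r, s, g1, g2, g3⟩ := bin_red' _ _ _ _ hA hAC (by omega)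
    obtain ⟨A', hA'⟩ : ∃ A', A' = (a * b - f ^ 2) * p ^ 2 + 2 * (a * d - e * f) * p * r +
      (a * c - e ^ 2) * r ^ 2 := ⟨_, rfl⟩
    rw [← hA'] at g2 g3
    obtain ⟨k, hk⟩ := round_exists a (f * p + e * r) ha
    obtain ⟨F, hF⟩ : ∃ F, F = f * p + e * r + k * a := ⟨_, rfl⟩
    rw [← hF] at hk
    obtain ⟨b', hb'⟩ : ∃ b', b' = a * k ^ 2 + b * p ^ 2 + c * r ^ 2 + 2 * d * p * r +
      2 * e * k * r + 2 * f * k * p := ⟨_, rfl⟩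
    have hab : a * b' = F ^ 2 + A' := by rw [hb', hF, hA']; ring
    have hb0 : 0 < b' := by
      by_contra hc
      push Not at hc
      nlinarith [sq_nonneg F]
    have hA2 : A' ^ 2 ≤ 4 * a := by linarith
    have ha2 : 2 ≤ a := by omega
    have hlt : b' < a := lt_aux a b' F A' ha2 hab hk g2 hA2
    obtain ⟨α, hα⟩ : ∃ α, α = s * y - q * z := ⟨_, rfl⟩
    obtain ⟨γ, hγ⟩ : ∃ γ, γ = p * z - r * y := ⟨_, rfl⟩
    have hy : y = p * α + q * γ := by rw [hα, hγ]; linear_combination (-y) * g1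
    have hz : z = r * α + s * γ := by rw [hα, hγ]; linear_combination (-z) * g1
    obtain ⟨β, hβ⟩ : ∃ β, x = k * α + β := ⟨x - k * α, by ring⟩
    refine ih b' a (b * q ^ 2 + 2 * d * q * s + c * s ^ 2) (f * q + e * s)
      (k * (f * q + e * s) + b * p * q + d * (p * s + q * r) + c * r * s) F α β γ hb0
      (by push_cast at hN; omega) (by linarith) ?_ ?_
    · have : ∀ t : ℤ, t = (a * b * c + 2 * d * e * f - a * d ^ 2 - b * e ^ 2 - c * f ^ 2) *
        (p * s - q * r) ^ 2 → t = 3 := by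
        intro t ht
        rw [ht, hdet, g1]; norm_num
      apply this
      rw [hb', hF]; ring
    · rw [← hm, hy, hz, hβ, hb', hF]; ring

lemma exists_prime_aux (m : ℕ) (hm : m % 24 = 5) :
    ∃ p c : ℕ, p.Prime ∧ p + 3 = 4 * c * m ∧ c % 12 = 1 := by
  have hco : (4 * m - 3).Coprime (48 * m) := by
    have h2 : (4 * m - 3).Coprime 2 := by
      rw [Nat.coprime_comm, Nat.Prime.coprime_iff_not_dvd Nat.prime_two]; omega
    have h3 : (4 * m - 3).Coprime 3 := by
      rw [Nat.coprime_comm, Nat.Prime.coprime_iff_not_dvd Nat.prime_three]; omega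
    have hm3 : m.Coprime 3 := by
      rw [Nat.coprime_comm, Nat.Prime.coprime_iff_not_dvd Nat.prime_three]; omega
    have h4 : (4 * m - 3).Coprime m := by
      have hd1 := Nat.gcd_dvd_left (4 * m - 3) m
      have hd2 := Nat.gcd_dvd_right (4 * m - 3) m
      have hd3 : Nat.gcd (4 * m - 3) m ∣ 3 := by
        have h := Nat.dvd_sub (Dvd.dvd.mul_left hd2 4) hd1
        have e : 4 * m - (4 * m - 3) = 3 := by omega
        rwa [e] at h
      have := Nat.dvd_gcd hd2 hd3
      rw [hm3] at this
      exact Nat.dvd_one.mp this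
    have h48 : (4 * m - 3).Coprime 48 := by
      have := (h2.pow_right 4).mul_right h3
      norm_num at this
      exact this
    exact h48.mul_right h4
  obtain ⟨p, hp1, hp2, hp3⟩ := Nat.forall_exists_prime_gt_and_modEq (4 * m) (by omega) hco
  have hd := (Nat.modEq_iff_dvd' (by omega)).mp hp3.symm
  obtain ⟨k, hk⟩ := hd
  refine ⟨p, 12 * k + 1, hp2, ?_, by omega⟩
  have : p = 48 * m * k + (4 * m - 3) := by omega
  have e : 4 * (12 * k + 1) * m = 48 * m * k + 4 * m := by ring
  rw [e]; omega

lemma sq_aux (m p c : ℕ) (hp : p.Prime) (h : p + 3 = 4 * c * m) (hc : c % 12 = 1) :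
    ∃ t : ℤ, (p : ℤ) ∣ t ^ 2 + 4 * c := by
  have := Fact.mk hp
  have hp4 : p % 4 = 1 := by
    have : p + 3 = 4 * (c * m) := by rw [h]; ring
    omega
  have hpo : Odd p := by rw [Nat.odd_iff]; omega
  have hco : Odd c := by rw [Nat.odd_iff]; omega
  have j1 : jacobiSym (c : ℤ) p = 1 := by
    rw [jacobiSym.quadratic_reciprocity_one_mod_four (by omega) hpo]
    have : jacobiSym (p : ℤ) c = jacobiSym (-1 * (3 : ℕ)) c := by
      apply jacobiSym.mod_left'
      apply Int.ModEq.symm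
      rw [Int.modEq_iff_dvd]
      refine ⟨4 * m, ?_⟩
      have : (p : ℤ) + 3 = 4 * c * m := by exact_mod_cast h
      push_cast
      linarith
    rw [this, jacobiSym.mul_left, jacobiSym.at_neg_one hco,
      ZMod.χ₄_nat_one_mod_four (by omega),
      jacobiSym.quadratic_reciprocity_one_mod_four' (by decide) (by omega),
      jacobiSym.mod_left, show ((c : ℤ) % (3 : ℕ)) = 1 by push_cast; omega]
    simp
  rw [← jacobiSym.legendreSym.to_jacobiSym] at j1
  have hc0 : ((c : ℤ) : ZMod p) ≠ 0 := by
    intro h0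
    rw [(legendreSym.eq_zero_iff p c).mpr h0] at j1
    norm_num at j1
  obtain ⟨u, hu⟩ := (legendreSym.eq_one_iff p hc0).mp j1
  obtain ⟨v, hv⟩ := (ZMod.exists_sq_eq_neg_one_iff (p := p)).mpr (by omega)
  obtain ⟨t, ht⟩ := ZMod.intCast_surjective (2 * u * v)
  refine ⟨t, ?_⟩
  rw [← ZMod.intCast_zmod_eq_zero_iff_dvd]
  push_cast at hu ⊢
  rw [ht, hu]
  linear_combination (-4 * u ^ 2) * hv

lemma rep (m : ℕ) (hm : m % 24 = 5) : ∃ X Y Z : ℤ, (m : ℤ) = X ^ 2 + Y ^ 2 + 3 * Z ^ 2 := by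
  obtain ⟨p, c, hp, h, hc⟩ := exists_prime_aux m hm
  obtain ⟨t, a, ha⟩ := sq_aux m p c hp h hc
  have h' : (p : ℤ) + 3 = 4 * c * m := by exact_mod_cast h
  have hp0 : (0 : ℤ) < p := by exact_mod_cast hp.pos
  have hc0 : (0 : ℤ) < c := by exact_mod_cast (by omega : 0 < c)
  have ha0 : 0 < a := by
    by_contra hcon
    push Not at hcon
    nlinarith [sq_nonneg t]
  rcases tern_red m a.toNat a p m 0 1 t 0 0 1 ha0 (by omega) (by linarith)
    (by linear_combination (-(m : ℤ)) * ha - h') (by ring) with h1 | ⟨X, Y, Z, h1⟩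
  · exact h1
  · exfalso
    have hm8 : (m : ℤ) % 8 = 5 := by omega
    rw [h1] at hm8
    have key : ∀ X Y Z : ZMod 8, X ^ 2 + 2 * (Y ^ 2 + Y * Z + Z ^ 2) ≠ 5 := by decide
    apply key X Y Z
    have : ((X ^ 2 + 2 * (Y ^ 2 + Y * Z + Z ^ 2) : ℤ) : ZMod 8) = ((5 : ℤ) : ZMod 8) :=
      (ZMod.intCast_eq_intCast_iff' _ _ 8).mpr (by push_cast; omega)
    push_cast at this
    exact this

/-- Representation with all variables odd. -/
lemma rep_odd (m : ℕ) (hm : m % 24 = 5) : ∃ X Y Z : ℤ, (m : ℤ) = X ^ 2 + Y ^ 2 + 3 * Z ^ 2 ∧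
    X % 2 = 1 ∧ Y % 2 = 1 ∧ Z % 2 = 1 := by
  have main : ∀ X Y Z : ℤ, (m : ℤ) = X ^ 2 + Y ^ 2 + 3 * Z ^ 2 → X % 2 = 1 → Y % 2 = 0 →
      Z % 2 = 0 → ∃ X Y Z : ℤ, (m : ℤ) = X ^ 2 + Y ^ 2 + 3 * Z ^ 2 ∧
      X % 2 = 1 ∧ Y % 2 = 1 ∧ Z % 2 = 1 := by
    intro X Y Z h hX hY hZ
    obtain ⟨x, rfl⟩ : ∃ x, X = 2 * x + 1 := ⟨X / 2, by omega⟩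
    obtain ⟨y, rfl⟩ : ∃ y, Y = 2 * y := ⟨Y / 2, by omega⟩
    obtain ⟨z, rfl⟩ : ∃ z, Z = 2 * z := ⟨Z / 2, by omega⟩
    have hyz : (y + z) % 2 = 1 := by
      by_contra hcon
      obtain ⟨w, hw⟩ : ∃ w, y = 2 * w - z := ⟨(y + z) / 2, by omega⟩
      have e : (m : ℤ) = 4 * (x * (x + 1)) + 1 + 16 * (w ^ 2 - w * z + z ^ 2) := by
        rw [h, hw]; ring
      have ev : (x * (x + 1)) % 2 = 0 := Int.even_iff.mp (Int.even_mul_succ_self x)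
      omega
    exact ⟨2 * x + 1, y - 3 * z, y + z, by rw [h]; ring, by omega, by omega, by omega⟩
  obtain ⟨X, Y, Z, h⟩ := rep m hm
  have hm4 : (m : ℤ) % 4 = 1 := by omega
  have sq : ∀ t : ℤ, (t % 2 = 0 ∧ t ^ 2 % 4 = 0) ∨ (t % 2 = 1 ∧ t ^ 2 % 4 = 1) := by
    intro t
    rcases Int.even_or_odd' t with ⟨k, rfl | rfl⟩
    · left; refine ⟨by omega, ?_⟩
      have : (2 * k) ^ 2 = 4 * k ^ 2 := by ring
      omega
    · right; refine ⟨by omega, ?_⟩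
      have : (2 * k + 1) ^ 2 = 4 * (k ^ 2 + k) + 1 := by ring
      omega
  rcases sq X with ⟨a1, a2⟩ | ⟨a1, a2⟩ <;> rcases sq Y with ⟨b1, b2⟩ | ⟨b1, b2⟩ <;>
    rcases sq Z with ⟨c1, c2⟩ | ⟨c1, c2⟩
  · omega
  · omega
  · exact main Y X Z (by rw [h]; ring) b1 a1 c1
  · omega
  · exact main X Y Z h a1 b1 c1
  · omega
  · omega
  · exact ⟨X, Y, Z, h, a1, b1, c1⟩

lemma sq_three (t : ℤ) : (t % 3 = 0 ∧ t ^ 2 % 3 = 0) ∨ (t % 3 ≠ 0 ∧ t ^ 2 % 3 = 1) := by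
  have : t % 3 = 0 ∨ t % 3 = 1 ∨ t % 3 = 2 := by omega
  rcases this with h | h | h
  · left; simp [pow_two, Int.mul_emod, h]
  · right; simp [pow_two, Int.mul_emod, h]
  · right; simp [pow_two, Int.mul_emod, h]

lemma rep_six (m : ℕ) (hm : m % 24 = 5) : ∃ X Y Z : ℤ, (m : ℤ) = X ^ 2 + Y ^ 2 + 3 * Z ^ 2 ∧
    X % 2 = 1 ∧ Y % 2 = 1 ∧ Z % 2 = 1 ∧ X % 3 ≠ 0 ∧ Y % 3 ≠ 0 ∧ Z % 3 ≠ 0 := by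
  obtain ⟨X, Y, Z, h, hX, hY, hZ⟩ := rep_odd m hm
  have hX3 : X % 3 ≠ 0 := by
    rcases sq_three X with ⟨a, b⟩ | ⟨a, b⟩ <;> rcases sq_three Y with ⟨c, d⟩ | ⟨c, d⟩ <;> omega
  have hY3 : Y % 3 ≠ 0 := by
    rcases sq_three X with ⟨a, b⟩ | ⟨a, b⟩ <;> rcases sq_three Y with ⟨c, d⟩ | ⟨c, d⟩ <;> omega
  by_cases hZ3 : Z % 3 = 0
  · have main : ∀ Z : ℤ, (m : ℤ) = X ^ 2 + Y ^ 2 + 3 * Z ^ 2 → Z % 2 = 1 → Z % 3 = 0 →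
        (Y + Z) % 4 = 2 → ∃ X Y Z : ℤ, (m : ℤ) = X ^ 2 + Y ^ 2 + 3 * Z ^ 2 ∧
        X % 2 = 1 ∧ Y % 2 = 1 ∧ Z % 2 = 1 ∧ X % 3 ≠ 0 ∧ Y % 3 ≠ 0 ∧ Z % 3 ≠ 0 := by
      intro Z h hZ hZ3 h4
      obtain ⟨w, hw⟩ : ∃ w, Y = 2 * w - Z := ⟨(Y + Z) / 2, by omega⟩
      exact ⟨X, w - 2 * Z, w, by rw [h, hw]; ring, by omega, by omega, by omega, by omega,
        by omega, by omega⟩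
    by_cases h4 : (Y + Z) % 4 = 2
    · exact main Z h hZ hZ3 h4
    · exact main (-Z) (by rw [h]; ring) (by omega) (by omega) (by omega)
  · exact ⟨X, Y, Z, h, hX, hY, hZ, hX3, hY3, hZ3⟩

lemma p5_of (t : ℤ) (h2 : t % 2 = 1) (h3 : t % 3 ≠ 0) : ∃ x : ℤ, 24 * p5 x + 1 = t ^ 2 := by
  have key : ∀ x : ℤ, 24 * p5 x + 1 = (6 * x - 1) ^ 2 := by
    intro x
    have h : (3 * x ^ 2 - x) % 2 = 0 := by
      rcases Int.even_or_odd' x with ⟨k, rfl | rfl⟩ <;> ring_nf <;> omega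
    have : 2 * p5 x = 3 * x ^ 2 - x := by unfold p5; omega
    linear_combination 12 * this
  have : t % 6 = 1 ∨ t % 6 = 5 := by omega
  rcases this with h | h
  · refine ⟨-(t / 6), ?_⟩
    rw [key]
    have : t = 6 * (t / 6) + 1 := by omega
    generalize t / 6 = k at *
    rw [this]; ring
  · refine ⟨t / 6 + 1, ?_⟩
    rw [key]
    have : t = 6 * (t / 6) + 5 := by omega
    generalize t / 6 = k at *
    rw [this]; ring

theorem p5_add_1p5_add_3p5_universal (n : ℕ) :
    ∃ x y z : ℤ, (n : ℤ) = p5 x + 1 * p5 y + 3 * p5 z := by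
  obtain ⟨X, Y, Z, h, hX, hY, hZ, hX3, hY3, hZ3⟩ := rep_six (24 * n + 5) (by omega)
  obtain ⟨x, hx⟩ := p5_of X hX hX3
  obtain ⟨y, hy⟩ := p5_of Y hY hY3
  obtain ⟨z, hz⟩ := p5_of Z hZ hZ3
  refine ⟨x, y, z, ?_⟩
  push_cast at h
  omega
end

section
/- For every nonnegative integer n, there exist integers x, y, z such that n = p_5(x) + 2·p_5(y) + 3·p_5(z), where p_5(x) = (3x² − x)/2. In other words, the sum p_5 + 2p_5 + 3p_5 is universal over ℤ. -/
/-- Aubry / Davenport–Cassels descent for three squares. -/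
lemma aubry (m : ℤ) : ∀ k : ℕ, ∀ T x y z : ℤ, 0 < T → T ≤ k →
    m * T ^ 2 = x ^ 2 + y ^ 2 + z ^ 2 → ∃ a b c : ℤ, m = a ^ 2 + b ^ 2 + c ^ 2 := by
  intro k
  induction k with
  | zero => intro T x y z h1 h2; push_cast at h2; omega
  | succ k ih =>
    intro T x y z hT hk h
    have round : ∀ x : ℤ, ∃ X : ℤ, 4 * (T * X - x) ^ 2 ≤ T ^ 2 := by
      intro x
      have e := Int.mul_ediv_add_emod x T
      have h0 := Int.emod_nonneg x hT.ne'
      have h1 := Int.emod_lt_of_pos x hT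
      by_cases hh : 2 * (x % T) ≤ T
      · refine ⟨x / T, ?_⟩
        have : T * (x / T) - x = - (x % T) := by linarith
        rw [this]; nlinarith
      · refine ⟨x / T + 1, ?_⟩
        have : T * (x / T + 1) - x = T - (x % T) := by linarith
        rw [this]; nlinarith
    obtain ⟨X, hX⟩ := round x
    obtain ⟨Y, hY⟩ := round y
    obtain ⟨Z, hZ⟩ := round z
    set R := (T * X - x) ^ 2 + (T * Y - y) ^ 2 + (T * Z - z) ^ 2 with hR
    have hRT : R < T ^ 2 := by nlinarith [pow_pos hT 2]
    have hR0 : 0 ≤ R := by positivity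
    set a := X ^ 2 + Y ^ 2 + Z ^ 2 - m with ha
    set b := 2 * (m * T - (x * X + y * Y + z * Z)) with hb
    have hTT : T * (a * T + b) = R := by
      rw [hR, ha, hb]; linear_combination h
    rcases hR0.eq_or_lt with h0 | h0
    · refine ⟨X, Y, Z, ?_⟩
      have e1 : (T * X - x) ^ 2 = 0 := by
        nlinarith [sq_nonneg (T * X - x), sq_nonneg (T * Y - y), sq_nonneg (T * Z - z)]
      have e2 : (T * Y - y) ^ 2 = 0 := by
        nlinarith [sq_nonneg (T * X - x), sq_nonneg (T * Y - y), sq_nonneg (T * Z - z)]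
      have e3 : (T * Z - z) ^ 2 = 0 := by
        nlinarith [sq_nonneg (T * X - x), sq_nonneg (T * Y - y), sq_nonneg (T * Z - z)]
      have e1 : x = T * X := by have := pow_eq_zero_iff (two_ne_zero) |>.1 e1; linarith
      have e2 : y = T * Y := by have := pow_eq_zero_iff (two_ne_zero) |>.1 e2; linarith
      have e3 : z = T * Z := by have := pow_eq_zero_iff (two_ne_zero) |>.1 e3; linarith
      have : T ^ 2 ≠ 0 := by positivity
      apply mul_left_cancel₀ this
      rw [e1, e2, e3] at h
      linear_combination h
    · have p1 : 0 < a * T + b := by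
        rw [← hTT] at h0; exact pos_of_mul_pos_right h0 hT.le
      have p2 : a * T + b < T := by
        rw [← hTT, sq] at hRT; exact lt_of_mul_lt_mul_left hRT hT.le
      refine ih (a * T + b) (a * x + b * X) (a * y + b * Y) (a * z + b * Z) p1
        (by push_cast at hk; omega) ?_
      have h2 : 2 * (x * X + y * Y + z * Z) = 2 * m * T - b := by rw [hb]; ring
      have h3 : X ^ 2 + Y ^ 2 + Z ^ 2 = a + m := by rw [ha]; ring
      linear_combination a ^ 2 * h - a * b * h2 - b ^ 2 * h3

lemma pigeon (q m : ℕ) (hq : 0 < q) (hm : 0 < m) (s : ℤ) :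
    ∃ t z w : ℤ, (t ≠ 0 ∨ z ≠ 0 ∨ w ≠ 0) ∧ t ^ 2 ≤ q ∧ z ^ 2 ≤ q * m ∧ w ^ 2 ≤ m ∧
      (q : ℤ) ∣ z - s * t ∧ (m : ℤ) ∣ z - w := by
  have : NeZero q := ⟨hq.ne'⟩
  have : NeZero m := ⟨hm.ne'⟩
  set A := Nat.sqrt q
  set B := Nat.sqrt (q * m)
  set C := Nat.sqrt m
  have hA : q < (A + 1) * (A + 1) := Nat.lt_succ_sqrt q
  have hB : q * m < (B + 1) * (B + 1) := Nat.lt_succ_sqrt (q * m)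
  have hC : m < (C + 1) * (C + 1) := Nat.lt_succ_sqrt m
  have hA' : A * A ≤ q := Nat.sqrt_le q
  have hB' : B * B ≤ q * m := Nat.sqrt_le (q * m)
  have hC' : C * C ≤ m := Nat.sqrt_le m
  have hcard : q * m < (A + 1) * ((B + 1) * (C + 1)) := by
    have h1 : (q * m) * (q * m) < ((A + 1) * (A + 1)) * ((C + 1) * (C + 1)) * ((B + 1) * (B + 1)) :=
      Nat.mul_lt_mul'' (Nat.mul_lt_mul'' hA hC) hB
    by_contra hh
    push Not at hh
    have := Nat.mul_le_mul hh hh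
    nlinarith
  let f : Fin (A + 1) × Fin (B + 1) × Fin (C + 1) → ZMod q × ZMod m := fun v =>
    ((((v.2.1 : ℕ) : ℤ) - s * ((v.1 : ℕ) : ℤ) : ℤ), (((v.2.1 : ℕ) : ℤ) - ((v.2.2 : ℕ) : ℤ) : ℤ))
  obtain ⟨u, v, huv, hf⟩ := Fintype.exists_ne_map_eq_of_card_lt f (by
    simp only [Fintype.card_prod, Fintype.card_fin, ZMod.card]; exact hcard)
  have bound : ∀ (D N : ℕ) (i j : Fin (D + 1)), D * D ≤ N →
      (((i : ℕ) : ℤ) - ((j : ℕ) : ℤ)) ^ 2 ≤ (N : ℤ) := by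
    intro D N i j h
    have hi := i.2
    have hj := j.2
    zify at h hi hj
    have := Int.natCast_nonneg (i : ℕ)
    have := Int.natCast_nonneg (j : ℕ)
    nlinarith
  have hf1 := congrArg Prod.fst hf
  have hf2 := congrArg Prod.snd hf
  simp only [f] at hf1 hf2
  rw [ZMod.intCast_eq_intCast_iff_dvd_sub] at hf1 hf2
  refine ⟨(v.1 : ℕ) - (u.1 : ℕ), (v.2.1 : ℕ) - (u.2.1 : ℕ), (v.2.2 : ℕ) - (u.2.2 : ℕ), ?_,
    bound A q _ _ hA', ?_, bound C m _ _ hC', ?_, ?_⟩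
  · by_contra hh
    push Not at hh
    apply huv
    obtain ⟨h1, h2, h3⟩ := hh
    ext <;> omega
  · have := bound B (q * m) v.2.1 u.2.1 hB'
    push_cast at this
    exact this
  · convert hf1 using 1; ring
  · convert hf2 using 1; ring

lemma three_squares (m : ℕ) (hm : m % 4 = 1) : ∃ a b c : ℤ, (m : ℤ) = a ^ 2 + b ^ 2 + c ^ 2 := by
  have hm0 : 0 < m := by omega
  have : NeZero (4 * m) := ⟨by omega⟩
  have hcop : Nat.Coprime (2 * m - 1) (4 * m) := by
    have h2 : Nat.Coprime (2 * m - 1) (2 * m) := by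
      have : 2 * m = (2 * m - 1) + 1 := by omega
      conv_rhs => rw [this]
      simp
    have h4 : Nat.Coprime (2 * m - 1) 2 := Nat.Coprime.coprime_mul_right_right h2
    have := Nat.Coprime.mul_right h4 h2
    convert this using 1; ring
  obtain ⟨q, -, hqp, hqm⟩ := Nat.forall_exists_prime_gt_and_eq_mod
    ((ZMod.isUnit_iff_coprime _ _).2 hcop) 0
  rw [ZMod.natCast_eq_natCast_iff] at hqm
  have : Fact q.Prime := ⟨hqp⟩
  have hq4 : q % 4 = 1 := by
    have : q ≡ 2 * m - 1 [MOD 4] := Nat.ModEq.of_mul_right _ hqm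
    unfold Nat.ModEq at this; omega
  have hqm' : (m : ℤ) ∣ q + 1 := by
    have : q ≡ 2 * m - 1 [MOD m] := Nat.ModEq.of_mul_left _ hqm
    have h1 := (Nat.ModEq.add_right 1 this)
    have h2 : 2 * m - 1 + 1 = m * 2 := by omega
    rw [h2] at h1
    have h3 : m ∣ q + 1 := (h1.dvd_iff (dvd_refl m)).2 (dvd_mul_right _ _)
    exact_mod_cast h3
  -- `m` is a square modulo `q`
  have hJ : jacobiSym m q = 1 := by
    rw [jacobiSym.quadratic_reciprocity_one_mod_four hm (Nat.odd_iff.2 (by omega))]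
    have : jacobiSym (q : ℤ) m = jacobiSym (-1) m := by
      apply jacobiSym.mod_left'
      exact Int.emod_eq_emod_iff_emod_sub_eq_zero.2
        (Int.emod_eq_zero_of_dvd (by simpa using hqm'))
    rw [this, jacobiSym.at_neg_one (Nat.odd_iff.2 (by omega)), ZMod.χ₄_nat_one_mod_four hm]
  rw [← jacobiSym.legendreSym.to_jacobiSym] at hJ
  have hmq : ((m : ℤ) : ZMod q) ≠ 0 := by
    intro h
    rw [(legendreSym.eq_zero_iff q m).2 h] at hJ
    exact absurd hJ (by norm_num)
  obtain ⟨r, hr⟩ := (legendreSym.eq_one_iff q hmq).1 hJ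
  obtain ⟨s, rfl⟩ := ZMod.intCast_surjective r
  have hs : (q : ℤ) ∣ s * s - m := by
    rw [← ZMod.intCast_eq_intCast_iff_dvd_sub]; push_cast; push_cast at hr; exact hr
  obtain ⟨t, z, w, hne, ht, hz, hw, d1, d2⟩ := pigeon q m hqp.pos hm0 s
  obtain ⟨a, b, hab⟩ := Nat.Prime.sq_add_sq (p := q) (by omega)
  have hab' : (q : ℤ) = a ^ 2 + b ^ 2 := by exact_mod_cast hab.symm
  have hcqm : IsCoprime (q : ℤ) (m : ℤ) := by
    obtain ⟨k, hk⟩ := hqm'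
    exact ⟨-1, k, by linarith⟩
  have dq : (q : ℤ) ∣ z ^ 2 + q * w ^ 2 - m * t ^ 2 := by
    obtain ⟨i, hi⟩ := d1
    obtain ⟨j, hj⟩ := hs
    exact ⟨i * (z + s * t) + w ^ 2 + j * t ^ 2, by linear_combination (z + s * t) * hi + t ^ 2 * hj⟩
  have dm : (m : ℤ) ∣ z ^ 2 + q * w ^ 2 - m * t ^ 2 := by
    obtain ⟨i, hi⟩ := d2
    obtain ⟨j, hj⟩ := hqm'
    exact ⟨i * (z + w) + j * w ^ 2 - t ^ 2, by linear_combination (z + w) * hi + w ^ 2 * hj⟩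
  obtain ⟨v, hv⟩ := hcqm.mul_dvd dq dm
  have hQ : (0 : ℤ) < q := by exact_mod_cast hqp.pos
  have hM : (0 : ℤ) < m := by exact_mod_cast hm0
  have hQM : (0 : ℤ) < q * m := mul_pos hQ hM
  have ht' : t ^ 2 < q := by
    refine lt_of_le_of_ne ht ?_
    intro h
    have hpz := Nat.prime_iff_prime_int.1 hqp
    rw [← h] at hpz
    exact (Prime.irreducible hpz).not_isSquare ⟨t, sq t⟩
  have hv0 : -1 < v := by
    have : (q : ℤ) * m * (-1) < q * m * v := by
      rw [← hv]; nlinarith [sq_nonneg z, mul_nonneg hQ.le (sq_nonneg w)]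
    exact lt_of_mul_lt_mul_left this hQM.le
  have hv2 : v ≤ 2 := by
    have : (q : ℤ) * m * v ≤ q * m * 2 := by
      rw [← hv]; nlinarith [mul_nonneg hM.le (sq_nonneg t)]
    exact le_of_mul_le_mul_left this hQM
  have hv3 : v = 0 ∨ v = 1 ∨ v = 2 := by omega
  rcases hv3 with rfl | rfl | rfl
  · have ht0 : t ≠ 0 := by
      rintro rfl
      have h1 : z ^ 2 = 0 := by nlinarith [sq_nonneg z, mul_nonneg hQ.le (sq_nonneg w)]
      have h2 : (q : ℤ) * w ^ 2 = 0 := by nlinarith [sq_nonneg z, mul_nonneg hQ.le (sq_nonneg w)]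
      have h3 : z = 0 := by simpa using h1
      have h4 : w = 0 := by simpa [hqp.ne_zero] using h2
      simp [h3, h4] at hne
    refine aubry m t.natAbs |t| z (a * w) (b * w) (abs_pos.2 ht0) (by simp) ?_
    rw [sq_abs]
    rw [hab'] at hv
    linear_combination -hv
  · have hpos : 0 < t ^ 2 + q := by positivity
    refine aubry m (t ^ 2 + q).natAbs (t ^ 2 + q) (z * t - q * w) (a * (z + w * t))
      (b * (z + w * t)) hpos (by rw [Int.natCast_natAbs]; exact le_abs_self _) ?_
    linear_combination -(t ^ 2 + q) * hv + (z + w * t) ^ 2 * hab'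
  · refine ⟨w, 0, 0, ?_⟩
    have : (q : ℤ) * m ≤ q * w ^ 2 := by nlinarith [mul_nonneg hM.le (sq_nonneg t)]
    have := le_of_mul_le_mul_left this hQ
    linarith

lemma sign3 (a : ℤ) : ∃ b : ℤ, b ^ 2 = a ^ 2 ∧ (b % 3 = 0 ∨ b % 3 = 1) ∧ b % 2 = a % 2 ∧
    (¬ (3 : ℤ) ∣ a → b % 3 = 1) := by
  by_cases h : a % 3 = 2
  · exact ⟨-a, by ring, by omega, by omega, by omega⟩
  · exact ⟨a, rfl, by omega, rfl, by omega⟩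

lemma primitive3 : ∀ k m : ℕ, m ≤ k → m % 4 = 1 →
    ∃ a b c : ℤ, (m : ℤ) = a ^ 2 + b ^ 2 + c ^ 2 ∧ ¬ ((3 : ℤ) ∣ a ∧ (3 : ℤ) ∣ b ∧ (3 : ℤ) ∣ c) := by
  intro k
  induction k with
  | zero => intro m h1 h2; omega
  | succ k ih =>
    intro m hk hm
    by_cases h9 : 9 ∣ m
    · obtain ⟨l, rfl⟩ := h9
      obtain ⟨a, b, c, h, hn⟩ := ih l (by omega) (by omega)
      have key : ∃ a b c : ℤ, (l : ℤ) = a ^ 2 + b ^ 2 + c ^ 2 ∧ ¬ (3 : ℤ) ∣ (a + b + c) := by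
        obtain ⟨a', ha, ha3, -, ha'⟩ := sign3 a
        obtain ⟨b', hb, hb3, -, hb'⟩ := sign3 b
        obtain ⟨c', hc, hc3, -, hc'⟩ := sign3 c
        by_cases hh : (3 : ℤ) ∣ a' + b' + c'
        · exact ⟨a', b', -c', by rw [h, ← ha, ← hb, ← hc]; ring, by omega⟩
        · exact ⟨a', b', c', by rw [h, ← ha, ← hb, ← hc], hh⟩
      obtain ⟨a, b, c, h, hn⟩ := key
      refine ⟨-a + 2 * b + 2 * c, 2 * a - b + 2 * c, 2 * a + 2 * b - c, ?_, by omega⟩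
      push_cast
      rw [h]; ring
    · obtain ⟨a, b, c, h⟩ := three_squares m hm
      refine ⟨a, b, c, h, ?_⟩
      rintro ⟨⟨x, rfl⟩, ⟨y, rfl⟩, ⟨z, rfl⟩⟩
      apply h9
      have : (9 : ℤ) ∣ m := ⟨x ^ 2 + y ^ 2 + z ^ 2, by rw [h]; ring⟩
      exact_mod_cast this

lemma p5_of_sq (a : ℤ) (h2 : a % 2 = 1) (h3 : a % 3 ≠ 0) : ∃ x : ℤ, 24 * p5 x + 1 = a ^ 2 := by
  have key : ∀ x : ℤ, 24 * p5 x + 1 = (6 * x - 1) ^ 2 := by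
    intro x
    have h : (3 * x ^ 2 - x) % 2 = 0 := by
      rcases Int.even_or_odd' x with ⟨y, rfl | rfl⟩ <;> ring_nf <;> omega
    have e : 2 * p5 x = 3 * x ^ 2 - x := by unfold p5; omega
    linear_combination 12 * e
  have h6 : a % 6 = 1 ∨ a % 6 = 5 := by omega
  rcases h6 with h | h
  · refine ⟨-(a / 6), ?_⟩
    rw [key]
    have : a = 6 * (a / 6) + 1 := by omega
    conv_rhs => rw [this]
    ring
  · refine ⟨a / 6 + 1, ?_⟩
    rw [key]
    have : a = 6 * (a / 6) + 5 := by omega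
    conv_rhs => rw [this]
    ring

lemma core1 (n s t v : ℤ) (h : 4 * n + 1 = s ^ 2 + t ^ 2 + v ^ 2) (hs : s % 2 = 1)
    (ht : t % 2 = 0) (hv : v % 2 = 0) (h1 : (s - t) % 3 ≠ 0) (h2 : (s + t + v) % 3 ≠ 0) :
    ∃ x y z : ℤ, n = p5 x + 2 * p5 y + 3 * p5 z := by
  obtain ⟨x, hx⟩ := p5_of_sq (s + t - 2 * v) (by omega) (by omega)
  obtain ⟨y, hy⟩ := p5_of_sq (s + t + v) (by omega) (by omega)
  obtain ⟨z, hz⟩ := p5_of_sq (s - t) (by omega) (by omega)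
  refine ⟨x, y, z, ?_⟩
  have : 24 * n = 24 * (p5 x + 2 * p5 y + 3 * p5 z) := by
    linear_combination 6 * h - hx - 2 * hy - 3 * hz
  omega

lemma core (n s t v : ℤ) (h : 4 * n + 1 = s ^ 2 + t ^ 2 + v ^ 2) (hs : s % 2 = 1)
    (ht : t % 2 = 0) (hv : v % 2 = 0) (h3 : ¬ ((3 : ℤ) ∣ s ∧ (3 : ℤ) ∣ t ∧ (3 : ℤ) ∣ v)) :
    ∃ x y z : ℤ, n = p5 x + 2 * p5 y + 3 * p5 z := by
  obtain ⟨s', es, hs3, hs2, hs'⟩ := sign3 s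
  obtain ⟨t', et, ht3, ht2, ht'⟩ := sign3 t
  obtain ⟨v', ev, hv3, hv2, hv'⟩ := sign3 v
  rw [← es, ← et, ← ev] at h
  by_cases c1 : (s' - t') % 3 ≠ 0 ∧ (s' + t' + v') % 3 ≠ 0
  · exact core1 n s' t' v' h (by omega) (by omega) (by omega) c1.1 c1.2
  by_cases c2 : (s' - v') % 3 ≠ 0 ∧ (s' + v' + t') % 3 ≠ 0
  · exact core1 n s' v' t' (by linarith) (by omega) (by omega) (by omega) c2.1 c2.2
  exact core1 n s' (-t') v' (by linear_combination h) (by omega) (by omega) (by omega)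
    (by omega) (by omega)

theorem p5_add_2p5_add_3p5_universal (n : ℕ) :
    ∃ x y z : ℤ, (n : ℤ) = p5 x + 2 * p5 y + 3 * p5 z := by
  obtain ⟨a, b, c, h, h3⟩ := primitive3 (4 * n + 1) (4 * n + 1) le_rfl (by omega)
  push_cast at h
  have sq4 : ∀ x : ℤ, (x % 2 = 0 ∧ x ^ 2 % 4 = 0) ∨ (x % 2 = 1 ∧ x ^ 2 % 4 = 1) := by
    intro x
    rcases Int.even_or_odd' x with ⟨y, rfl | rfl⟩
    · left; constructor
      · omega
      · ring_nf; omega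
    · right; constructor
      · omega
      · ring_nf; omega
  have ha := sq4 a
  have hb := sq4 b
  have hc := sq4 c
  have : (a % 2 = 1 ∧ b % 2 = 0 ∧ c % 2 = 0) ∨ (b % 2 = 1 ∧ a % 2 = 0 ∧ c % 2 = 0) ∨
      (c % 2 = 1 ∧ a % 2 = 0 ∧ b % 2 = 0) := by omega
  rcases this with ⟨h1, h2, h4⟩ | ⟨h1, h2, h4⟩ | ⟨h1, h2, h4⟩
  · exact core n a b c h h1 h2 h4 h3
  · exact core n b a c (by linarith) h1 h2 h4 (by tauto)
  · exact core n c a b (by linarith) h1 h2 h4 (by tauto)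
end

section
/- For every nonnegative integer n, there exist integers x, y, z such that n = p_5(x) + 2·p_5(y) + 6·p_5(z), where p_5(x) = (3x² − x)/2. In other words, the sum p_5 + 2p_5 + 6p_5 is universal over ℤ. -/
/-- The symmetric matrix with the given entries is a Gram matrix of three vectors of `ℤ³`. -/
def IsGram (a b c d e f : ℤ) : Prop :=
  ∃ x1 x2 x3 y1 y2 y3 z1 z2 z3 : ℤ,
    x1 * x1 + x2 * x2 + x3 * x3 = a ∧ x1 * y1 + x2 * y2 + x3 * y3 = b ∧
    y1 * y1 + y2 * y2 + y3 * y3 = c ∧ x1 * z1 + x2 * z2 + x3 * z3 = d ∧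
    y1 * z1 + y2 * z2 + y3 * z3 = e ∧ z1 * z1 + z2 * z2 + z3 * z3 = f

theorem IsGram.swap12 {a b c d e f : ℤ} (h : IsGram c b a e d f) : IsGram a b c d e f := by
  obtain ⟨x1, x2, x3, y1, y2, y3, z1, z2, z3, h1, h2, h3, h4, h5, h6⟩ := h
  exact ⟨y1, y2, y3, x1, x2, x3, z1, z2, z3, h3, by linarith, h1, h5, h4, h6⟩

theorem IsGram.swap23 {a b c d e f : ℤ} (h : IsGram a d f b e c) : IsGram a b c d e f := by
  obtain ⟨x1, x2, x3, y1, y2, y3, z1, z2, z3, h1, h2, h3, h4, h5, h6⟩ := h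
  exact ⟨x1, x2, x3, z1, z2, z3, y1, y2, y3, h1, h4, h6, h2, by linarith, h3⟩

theorem IsGram.shift21 {a b c d e f : ℤ} (k : ℤ)
    (h : IsGram a (b + k * a) (c + 2 * k * b + k ^ 2 * a) d (e + k * d) f) :
    IsGram a b c d e f := by
  obtain ⟨x1, x2, x3, y1, y2, y3, z1, z2, z3, h1, h2, h3, h4, h5, h6⟩ := h
  refine ⟨x1, x2, x3, y1 - k * x1, y2 - k * x2, y3 - k * x3, z1, z2, z3, h1, ?_, ?_, h4, ?_, h6⟩
  · linear_combination h2 - k * h1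
  · linear_combination h3 - 2 * k * h2 + k ^ 2 * h1
  · linear_combination h5 - k * h4

theorem IsGram.shift31 {a b c d e f : ℤ} (k : ℤ)
    (h : IsGram a b c (d + k * a) (e + k * b) (f + 2 * k * d + k ^ 2 * a)) :
    IsGram a b c d e f := 
  (IsGram.shift21 k h.swap23).swap23

theorem IsGram.shift32 {a b c d e f : ℤ} (k : ℤ)
    (h : IsGram a b c (d + k * b) (e + k * c) (f + 2 * k * e + k ^ 2 * c)) :
    IsGram a b c d e f := 
  (IsGram.shift31 k h.swap12).swap12

theorem exists_shift (a b : ℤ) (ha : 0 < a) :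
    ∃ k : ℤ, -a ≤ 2 * (b + k * a) ∧ 2 * (b + k * a) ≤ a := by
  refine ⟨-((2 * b + a) / (2 * a)), ?_⟩
  have h1 := Int.emod_nonneg (2 * b + a) (b := 2 * a) (by omega)
  have h2 := Int.emod_lt_of_pos (2 * b + a) (b := 2 * a) (by omega)
  have h3 := Int.emod_add_mul_ediv (2 * b + a) (2 * a)
  constructor <;> nlinarith

/-- A reduced form of determinant one is the identity. -/
theorem reduced_isGram {a b c d e f : ℤ} (ha : 0 < a) (hA : 0 < a * c - b ^ 2)
    (hdet : a * c * f + 2 * b * d * e - a * e ^ 2 - c * d ^ 2 - f * b ^ 2 = 1)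
    (hb1 : -a ≤ 2 * b) (hb2 : 2 * b ≤ a) (hd1 : -a ≤ 2 * d) (hd2 : 2 * d ≤ a)
    (hB1 : -(a * c - b ^ 2) ≤ 2 * (a * e - b * d)) (hB2 : 2 * (a * e - b * d) ≤ a * c - b ^ 2)
    (hac : a ≤ c) (hAC : a * c - b ^ 2 ≤ a * f - d ^ 2) : IsGram a b c d e f := by
  have key : (a * c - b ^ 2) * (a * f - d ^ 2) - (a * e - b * d) ^ 2 = a := by
    linear_combination a * hdet
  obtain ⟨A, hAe⟩ : ∃ A, A = a * c - b ^ 2 := ⟨_, rfl⟩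
  obtain ⟨B, hBe⟩ : ∃ B, B = a * e - b * d := ⟨_, rfl⟩
  obtain ⟨C, hCe⟩ : ∃ C, C = a * f - d ^ 2 := ⟨_, rfl⟩
  rw [← hAe] at hA hB1 hB2 hAC key
  rw [← hBe] at hB1 hB2 key
  rw [← hCe] at hAC key
  have h1 : 3 * A ^ 2 ≤ 4 * a := by nlinarith
  have h2 : 3 * a ^ 2 ≤ 4 * A := by nlinarith
  have ha1 : a = 1 := by
    by_contra hne
    have ha2 : 2 ≤ a := by omega
    have h3 : 3 * a ≤ 2 * A := by nlinarith
    nlinarith [mul_le_mul_of_nonneg_left h3 hA.le]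
  subst ha1
  have hA1 : A = 1 := by nlinarith
  have hb : b = 0 := by omega
  have hd : d = 0 := by omega
  have hB : B = 0 := by omega
  subst hA1 hb hd hB
  have hc : c = 1 := by linarith
  have he : e = 0 := by linarith
  have hf : f = 1 := by linarith
  subst hc he hf
  exact ⟨1, 0, 0, 0, 1, 0, 0, 0, 1, by norm_num⟩

theorem isGram_of_det_one (s : ℕ) : ∀ t : ℕ, ∀ a b c d e f : ℤ, a.toNat = s →
    (a * c - b ^ 2).toNat = t → 0 < a → 0 < a * c - b ^ 2 →
    a * c * f + 2 * b * d * e - a * e ^ 2 - c * d ^ 2 - f * b ^ 2 = 1 →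
    IsGram a b c d e f := by
  induction s using Nat.strong_induction_on with
  | _ s ihs =>
  intro t
  induction t using Nat.strong_induction_on with
  | _ t iht =>
  -- it suffices to treat normalized forms
  have main : ∀ a b c d e f : ℤ, a.toNat = s →
      (a * c - b ^ 2).toNat = t → 0 < a → 0 < a * c - b ^ 2 →
      a * c * f + 2 * b * d * e - a * e ^ 2 - c * d ^ 2 - f * b ^ 2 = 1 →
      -a ≤ 2 * b → 2 * b ≤ a → -a ≤ 2 * d → 2 * d ≤ a →
      -(a * c - b ^ 2) ≤ 2 * (a * e - b * d) → 2 * (a * e - b * d) ≤ a * c - b ^ 2 →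
      IsGram a b c d e f := by
    intro a b c d e f hs ht ha hA hdet hb1 hb2 hd1 hd2 hB1 hB2
    by_cases hac : a ≤ c
    · by_cases hAC : a * c - b ^ 2 ≤ a * f - d ^ 2
      · exact reduced_isGram ha hA hdet hb1 hb2 hd1 hd2 hB1 hB2 hac hAC
      · have key : (a * c - b ^ 2) * (a * f - d ^ 2) - (a * e - b * d) ^ 2 = a := by
          linear_combination a * hdet
        have hC : 0 < a * f - d ^ 2 := by
          by_contra hC
          nlinarith [mul_nonneg hA.le (by linarith : 0 ≤ -(a * f - d ^ 2)),
            sq_nonneg (a * e - b * d)]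
        refine (iht (a * f - d ^ 2).toNat ?_ a d f b e c hs rfl ha hC ?_).swap23
        · omega
        · linear_combination hdet
    · have hc : 0 < c := by
        by_contra hc
        nlinarith [mul_nonneg ha.le (by linarith : 0 ≤ -c), sq_nonneg b]
      refine (ihs c.toNat ?_ _ c b a e d f rfl rfl hc ?_ ?_).swap12
      · omega
      · linarith
      · linear_combination hdet
  intro a b c d e f hs ht ha hA hdet
  obtain ⟨k, hk1, hk2⟩ := exists_shift a b ha
  apply IsGram.shift21 k
  have e1 : a * (c + 2 * k * b + k ^ 2 * a) - (b + k * a) ^ 2 = a * c - b ^ 2 := by ring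
  have e2 : a * (c + 2 * k * b + k ^ 2 * a) * f + 2 * (b + k * a) * d * (e + k * d)
      - a * (e + k * d) ^ 2 - (c + 2 * k * b + k ^ 2 * a) * d ^ 2 - f * (b + k * a) ^ 2 = 1 := by
    linear_combination hdet
  generalize b + k * a = b' at *
  generalize c + 2 * k * b + k ^ 2 * a = c' at *
  generalize e + k * d = e' at *
  rw [← e1] at ht hA
  obtain ⟨l, hl1, hl2⟩ := exists_shift (a * c' - b' ^ 2) (a * e' - b' * d) hA
  apply IsGram.shift32 l
  have e3 : a * (e' + l * c') - b' * (d + l * b') = 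
    (a * e' - b' * d) + l * (a * c' - b' ^ 2) := by ring
  rw [← e3] at hl1 hl2
  have e4 : a * c' * (f + 2 * l * e' + l ^ 2 * c') + 2 * b' * (d + l * b') * (e' + l * c')
      - a * (e' + l * c') ^ 2 - c' * (d + l * b') ^ 2
      - (f + 2 * l * e' + l ^ 2 * c') * b' ^ 2 = 1 := by
    linear_combination e2
  generalize d + l * b' = d' at *
  generalize f + 2 * l * e' + l ^ 2 * c' = f' at *
  generalize e' + l * c' = e'' at *
  obtain ⟨j, hj1, hj2⟩ := exists_shift a d' ha
  apply IsGram.shift31 j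
  refine main _ _ _ _ _ _ hs ht ha hA ?_ hk1 hk2 hj1 hj2 ?_ ?_
  · linear_combination e4
  · linarith
  · linarith

open NumberTheorySymbols in
/-- Every number `8n+3` is a sum of three squares. -/
theorem three_squares_s2 (n : ℕ) :
    ∃ x y z : ℤ, x * x + y * y + z * z = 8 * n + 3 := by
  have hcop : (4 * n + 1).Coprime (4 * (8 * n + 3)) := by
    apply Nat.Coprime.mul_right
    · have : Nat.Coprime (4 * n + 1) 4 := by
        rw [add_comm]
        simp
      exact this
    · have : 8 * n + 3 = 1 + (4 * n + 1) * 2 := by ring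
      rw [this]
      simp
  obtain ⟨p, hpgt, hp, hmod⟩ :=
    Nat.forall_exists_prime_gt_and_modEq (4 * n + 1) (by omega : 4 * (8 * n + 3) ≠ 0) hcop
  obtain ⟨v, hv⟩ := (Nat.modEq_iff_dvd' hpgt.le).1 hmod.symm
  have hpv : p = 4 * (8 * n + 3) * v + (4 * n + 1) := by omega
  have hp4 : p % 4 = 1 := by
    rw [hpv, mul_assoc]; omega
  have h2p : 2 * p + 1 = (8 * v + 1) * (8 * n + 3) := by rw [hpv]; ring
  obtain ⟨b, hb⟩ : ∃ b, b = 8 * v + 1 := ⟨_, rfl⟩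
  rw [← hb] at h2p
  have hbodd : Odd b := ⟨4 * v, by omega⟩
  have hpodd : Odd p := by rw [Nat.odd_iff]; omega
  have : Fact p.Prime := ⟨hp⟩
  have hJ1 : J(-(b : ℤ) | p) = 1 := by
    rw [jacobiSym.neg _ hpodd, ZMod.χ₄_nat_one_mod_four hp4, one_mul,
      jacobiSym.quadratic_reciprocity_one_mod_four' hbodd hp4]
    have h2 : J(2 | b) = 1 := by
      rw [jacobiSym.at_two hbodd, ZMod.χ₈_nat_eq_if_mod_eight]
      have : b % 8 = 1 := by omega
      have : b % 2 = 1 := by omega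
      rw [if_neg (by omega), if_pos (by omega)]
    have h3 : J(2 * (p : ℤ) | b) = J(-1 | b) := by
      apply jacobiSym.mod_left'
      apply Int.emod_emod_of_dvd _ (dvd_refl _) |>.symm.trans
      apply (Int.emod_emod_of_dvd _ (dvd_refl _)).trans
      apply Int.emod_eq_emod_iff_emod_sub_eq_zero.2
      apply Int.emod_eq_zero_of_dvd
      refine ⟨8 * n + 3, ?_⟩
      have : (2 * p + 1 : ℤ) = b * (8 * n + 3) := by exact_mod_cast h2p
      linarith
    rw [jacobiSym.mul_left, h2, one_mul, jacobiSym.at_neg_one hbodd,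
      ZMod.χ₄_nat_one_mod_four (by omega)] at h3
    exact h3
  obtain ⟨r, hr⟩ := ZMod.isSquare_of_jacobiSym_eq_one hJ1
  obtain ⟨u, rfl⟩ := ZMod.intCast_surjective r
  have hdvd : (p : ℤ) ∣ u * u + b := by
    rw [← ZMod.intCast_zmod_eq_zero_iff_dvd] 
    push_cast at hr ⊢
    rw [← hr]; ring
  -- adjust parity
  obtain ⟨t, ht2, htp⟩ : ∃ t : ℤ, t % 2 = 1 ∧ (p : ℤ) ∣ t * t + b := by
    rcases Int.emod_two_eq_zero_or_one u with h | h
    · refine ⟨u + p, by omega, ?_⟩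
      have : (u + p) * (u + p) + (b : ℤ) = (u * u + b) + p * (2 * u + p) := by ring
      rw [this]
      exact dvd_add hdvd (dvd_mul_right _ _)
    · exact ⟨u, h, hdvd⟩
  have h2d : (2 : ℤ) ∣ t * t + b := by
    obtain ⟨w, hw⟩ : ∃ w, t = 2 * w + 1 := ⟨t / 2, by omega⟩
    refine ⟨2 * w * w + 2 * w + 4 * v + 1, ?_⟩
    rw [hw, hb]; push_cast; ring
  have hcop2 : IsCoprime (2 : ℤ) (p : ℤ) := by
    have : Nat.Coprime 2 p := (Nat.coprime_two_left).2 hpodd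
    exact_mod_cast Nat.isCoprime_iff_coprime.2 this
  obtain ⟨a, ha⟩ := hcop2.mul_dvd h2d htp
  have hp0 : (0 : ℤ) < p := by exact_mod_cast hp.pos
  have hb0 : (0 : ℤ) < b := by omega
  have ha0 : 0 < a := by
    by_contra hneg
    nlinarith [mul_nonneg hp0.le (by linarith : 0 ≤ -a), mul_self_nonneg t]
  have h2p' : (2 * p + 1 : ℤ) = b * (8 * n + 3) := by exact_mod_cast h2p
  have hA : a * (2 * p) - t ^ 2 = b := by linear_combination -ha
  obtain ⟨x1, x2, x3, y1, y2, y3, z1, z2, z3, h1, h2, h3, h4, h5, h6⟩ :=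
    isGram_of_det_one _ _ a t (2 * p) 1 0 (8 * n + 3) rfl rfl ha0 (by rw [hA]; exact hb0)
      (by linear_combination (8 * n + 3) * hA - h2p')
  exact ⟨z1, z2, z3, h6⟩

theorem sq_mod8 (x : ℤ) : (x % 2 = 1 ∧ (x * x) % 8 = 1) ∨
    (x % 2 = 0 ∧ ((x * x) % 8 = 0 ∨ (x * x) % 8 = 4)) := by
  have h : x % 8 = 0 ∨ x % 8 = 1 ∨ x % 8 = 2 ∨ x % 8 = 3 ∨ x % 8 = 4 ∨ x % 8 = 5 ∨ x % 8 = 6 ∨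
    x % 8 = 7 := by omega
  rcases h with h | h | h | h | h | h | h | h <;> simp [Int.mul_emod, h] <;> omega

theorem sq_mod3 (x : ℤ) : (x % 3 = 0 ∧ (x * x) % 3 = 0) ∨
    (x % 3 ≠ 0 ∧ (x * x) % 3 = 1) := by
  have h : x % 3 = 0 ∨ x % 3 = 1 ∨ x % 3 = 2 := by omega
  rcases h with h | h | h <;> simp [Int.mul_emod, h]

/-- Step 1: a representation by `x² + 2y² + 6z²` with `y ≡ z (mod 2)`. -/
theorem step1 (n : ℕ) : ∃ a b c : ℤ, a * a + 2 * (b * b) + 6 * (c * c) = 24 * n + 9 ∧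
    (b - c) % 2 = 0 := by
  obtain ⟨x, y, z, h⟩ := three_squares_s2 n
  have hx := sq_mod8 x
  have hy := sq_mod8 y
  have hz := sq_mod8 z
  have hx1 : x % 2 = 1 := by omega
  have hy1 : y % 2 = 1 := by omega
  have hz1 : z % 2 = 1 := by omega
  obtain ⟨p, hp⟩ : ∃ p, x = y + 2 * p := ⟨(x - y) / 2, by omega⟩
  obtain ⟨q, hq⟩ : ∃ q, y = z + 2 * q := ⟨(y - z) / 2, by omega⟩
  refine ⟨x + y + z, 2 * p + q, q, ?_, by omega⟩
  subst hp hq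
  linear_combination 3 * h

/-- Step 2: all odd. -/
theorem step2 (n : ℕ) : ∃ a b c : ℤ, a * a + 2 * (b * b) + 6 * (c * c) = 24 * n + 9 ∧
    a % 2 = 1 ∧ b % 2 = 1 ∧ c % 2 = 1 := by
  obtain ⟨a, b, c, h, hbc⟩ := step1 n
  have ha : a % 2 = 1 := by
    have := sq_mod8 a
    omega
  by_cases hb : b % 2 = 1
  · exact ⟨a, b, c, h, ha, hb, by omega⟩
  obtain ⟨e, he⟩ : ∃ e, b = 2 * e := ⟨b / 2, by omega⟩
  obtain ⟨d, hd⟩ : ∃ d, c = 2 * d := ⟨c / 2, by omega⟩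
  subst he hd
  have fin : ∀ a e d : ℤ, a * a + 8 * (e * e) + 24 * (d * d) = 24 * n + 9 → (e + d) % 2 = 1 →
      ∃ a b c : ℤ, a * a + 2 * (b * b) + 6 * (c * c) = 24 * n + 9 ∧
        a % 2 = 1 ∧ b % 2 = 1 ∧ c % 2 = 1 := by
    intro a e d h hed
    refine ⟨a, e + 3 * d, e - d, by linear_combination h, ?_, by omega, by omega⟩
    have := sq_mod8 a
    omega
  have h' : a * a + 8 * (e * e) + 24 * (d * d) = 24 * n + 9 := by linear_combination h
  by_cases hed : (e + d) % 2 = 1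
  · exact fin a e d h' hed
  have hsign : ∃ e' : ℤ, e' * e' = e * e ∧ (e' + d) % 2 = 0 ∧ (a - e') % 3 = 0 := by
    have h1 := sq_mod3 a
    have h2 := sq_mod3 e
    by_cases h3 : (a - e) % 3 = 0
    · exact ⟨e, rfl, by omega, h3⟩
    · refine ⟨-e, by ring, by omega, ?_⟩
      have h4 : a % 3 = 0 ↔ e % 3 = 0 := by omega
      have h5 : a % 3 = 0 ∨ a % 3 = 1 ∨ a % 3 = 2 := by omega
      have h6 : e % 3 = 0 ∨ e % 3 = 1 ∨ e % 3 = 2 := by omega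
      rcases h5 with h5 | h5 | h5 <;> rcases h6 with h6 | h6 | h6 <;> omega
  obtain ⟨e', he1, he2, he3⟩ := hsign
  obtain ⟨k, hk⟩ : ∃ k, a = e' + 3 * k := ⟨(a - e') / 3, by omega⟩
  refine fin (k + 3 * e') k d ?_ (by omega)
  rw [← he1] at h'
  subst hk
  linear_combination h'

/-- Ascent: if `3 ∣ a² + 2b² > 0`, one can choose `a, b` prime to `3`. -/
theorem step3 (N : ℕ) : ∀ a b : ℤ, (a * a + 2 * (b * b)).toNat = N → 
    (a * a + 2 * (b * b)) % 3 = 0 → a % 2 = 1 → b % 2 = 1 →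
    ∃ a' b' : ℤ, a' * a' + 2 * (b' * b') = a * a + 2 * (b * b) ∧
      a' % 2 = 1 ∧ b' % 2 = 1 ∧ a' % 3 ≠ 0 ∧ b' % 3 ≠ 0 := by
  induction N using Nat.strong_induction_on with
  | _ N ih =>
  intro a b hN h3 ha hb
  have h1 := sq_mod3 a
  have h2 := sq_mod3 b
  by_cases ha3 : a % 3 = 0
  · obtain ⟨u, hu⟩ : ∃ u, a = 3 * u := ⟨a / 3, by omega⟩
    obtain ⟨w, hw⟩ : ∃ w, b = 3 * w := ⟨b / 3, by omega⟩
    subst hu hw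
    -- get a representation of `u² + 2w²` in which not both are divisible by 3
    have hu2 : u % 2 = 1 := by omega
    have hw2 : w % 2 = 1 := by omega
    have hprim : ∃ u' w' : ℤ, u' * u' + 2 * (w' * w') = u * u + 2 * (w * w) ∧
        u' % 2 = 1 ∧ w' % 2 = 1 ∧ (u' % 3 ≠ 0 ∨ w' % 3 ≠ 0) := by
      by_cases h : (u * u + 2 * (w * w)) % 3 = 0
      · have hpos : 0 < u * u := by
          have : u ≠ 0 := by omega
          exact mul_self_pos.2 this
        have hw0 := mul_self_nonneg w
        have e1 : 3 * u * (3 * u) + 2 * (3 * w * (3 * w)) = 9 * (u * u + 2 * (w * w)) := by ring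
        rw [e1] at hN
        obtain ⟨u', w', g1, g2, g3, g4, g5⟩ := ih _ (by omega) u w rfl h hu2 hw2
        exact ⟨u', w', g1, g2, g3, Or.inl g4⟩
      · refine ⟨u, w, rfl, hu2, hw2, ?_⟩
        have h1 := sq_mod3 u
        have h2 := sq_mod3 w
        omega
    obtain ⟨u', w', g1, g2, g3, g4⟩ := hprim
    -- multiply by `(1 ± 2√-2)`, of norm 9
    by_cases hs : (u' - w') % 3 = 0
    · refine ⟨u' + 4 * w', 2 * u' - w', ?_, by omega, by omega, by omega, by omega⟩
      linear_combination 9 * g1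
    · refine ⟨u' - 4 * w', 2 * u' + w', ?_, by omega, by omega, by omega, by omega⟩
      linear_combination 9 * g1
  · exact ⟨a, b, rfl, ha, hb, ha3, by omega⟩

theorem step4 (n : ℕ) : ∃ a b c : ℤ, a * a + 2 * (b * b) + 6 * (c * c) = 24 * n + 9 ∧
    a % 2 = 1 ∧ b % 2 = 1 ∧ c % 2 = 1 ∧ a % 3 ≠ 0 ∧ b % 3 ≠ 0 ∧ c % 3 ≠ 0 := by
  obtain ⟨a, b, c, h, ha, hb, hc⟩ := step2 n
  obtain ⟨a, b, h', ha, hb, ha3, hb3⟩ := step3 _ a b rfl (by omega) ha hb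
  rw [← h'] at h
  by_cases hc3 : c % 3 = 0
  · obtain ⟨k, hk⟩ : ∃ k, b = c + 2 * k := ⟨(b - c) / 2, by omega⟩
    subst hk
    by_cases hk2 : k % 2 = 1
    · exact ⟨a, k + 2 * c, k, by linear_combination h, by omega⟩
    · exact ⟨a, k - c, k + c, by linear_combination h, by omega⟩
  · exact ⟨a, b, c, h, by omega⟩

theorem to_p5 (a : ℤ) (h2 : a % 2 = 1) (h3 : a % 3 ≠ 0) : ∃ x : ℤ, a * a = 24 * p5 x + 1 := by
  have key : ∀ x : ℤ, (6 * x - 1) * (6 * x - 1) = 24 * p5 x + 1 := by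
    intro x
    have hev : (3 * x ^ 2 - x) % 2 = 0 := by
      rcases Int.emod_two_eq_zero_or_one x with h | h <;>
        simp [pow_two, Int.sub_emod, Int.mul_emod, h]
    have : 2 * p5 x = 3 * x ^ 2 - x := by unfold p5; omega
    linear_combination -12 * this
  have : a % 6 = 1 ∨ a % 6 = 5 := by omega
  rcases this with h | h
  · obtain ⟨x, hx⟩ : ∃ x, a = -(6 * x - 1) := ⟨-(a / 6), by omega⟩
    exact ⟨x, by rw [← key, hx]; ring⟩
  · obtain ⟨x, hx⟩ : ∃ x, a = 6 * x - 1 := ⟨(a + 1) / 6, by omega⟩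
    exact ⟨x, by rw [← key, hx]⟩

theorem p5_add_2p5_add_6p5_universal (n : ℕ) :
    ∃ x y z : ℤ, (n : ℤ) = p5 x + 2 * p5 y + 6 * p5 z := by
  obtain ⟨a, b, c, h, ha, hb, hc, ha3, hb3, hc3⟩ := step4 n
  obtain ⟨x, hx⟩ := to_p5 a ha ha3
  obtain ⟨y, hy⟩ := to_p5 b hb hb3
  obtain ⟨z, hz⟩ := to_p5 c hc hc3
  exact ⟨x, y, z, by omega⟩
end

section
/- For every nonnegative integer n, there exist integers x, y, z such that n = p_5(x) + 3·p_5(y) + 4·p_5(z), where p_5(x) = (3x² − x)/2. In other words, the sum p_5 + 3p_5 + 4p_5 is universal over ℤ. -/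
/-- A positive ternary form `A x² + B y² + C z² + D yz + E xz + F xy` of
half-discriminant `3` that represents `M`. -/
def GoodForm (M A B C D E F : ℤ) : Prop :=
  0 < A ∧ 0 < 4 * A * B - F ^ 2 ∧
  4 * A * B * C + D * E * F - A * D ^ 2 - B * E ^ 2 - C * F ^ 2 = 3 ∧
  ∃ x y z : ℤ, M = A * x ^ 2 + B * y ^ 2 + C * z ^ 2 + D * y * z + E * x * z + F * x * y

theorem GoodForm.key {M A B C D E F : ℤ} (h : GoodForm M A B C D E F) :
    (4 * A * B - F ^ 2) * (4 * A * C - E ^ 2) - (2 * A * D - E * F) ^ 2 = 12 * A := by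
  obtain ⟨_, _, h3, _⟩ := h
  linear_combination 4 * A * h3

theorem GoodForm.Q_pos {M A B C D E F : ℤ} (h : GoodForm M A B C D E F) :
    0 < 4 * A * C - E ^ 2 := by
  have hk := h.key
  obtain ⟨h1, h2, _, _⟩ := h
  by_contra hc
  push Not at hc
  nlinarith [sq_nonneg (2 * A * D - E * F), mul_nonneg h2.le (neg_nonneg.mpr hc)]

theorem GoodForm.B_pos {M A B C D E F : ℤ} (h : GoodForm M A B C D E F) : 0 < B := by
  obtain ⟨h1, h2, _, _⟩ := h
  by_contra hc
  push Not at hc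
  nlinarith [sq_nonneg F, mul_nonneg h1.le (neg_nonneg.mpr hc)]

theorem GoodForm.swap_xy {M A B C D E F : ℤ} (h : GoodForm M A B C D E F) :
    GoodForm M B A C E D F := by
  have hB := h.B_pos
  obtain ⟨h1, h2, h3, x, y, z, h4⟩ := h
  exact ⟨hB, by linarith, by linarith, y, x, z, by linarith⟩

theorem GoodForm.swap_yz {M A B C D E F : ℤ} (h : GoodForm M A B C D E F) :
    GoodForm M A C B D F E := by
  have hQ := h.Q_pos
  obtain ⟨h1, h2, h3, x, y, z, h4⟩ := h
  exact ⟨h1, hQ, by linarith, x, z, y, by linarith⟩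

/-- substitute `x ↦ x + t y` -/
theorem GoodForm.shift_xy {M A B C D E F : ℤ} (h : GoodForm M A B C D E F) (t : ℤ) :
    GoodForm M A (B + F * t + A * t ^ 2) C (D + E * t) E (F + 2 * A * t) := by
  obtain ⟨h1, h2, h3, x, y, z, h4⟩ := h
  exact ⟨h1, by nlinarith, by linear_combination h3, x - t * y, y, z, by linear_combination h4⟩

/-- substitute `x ↦ x + t z` -/
theorem GoodForm.shift_xz {M A B C D E F : ℤ} (h : GoodForm M A B C D E F) (t : ℤ) :
    GoodForm M A B (C + E * t + A * t ^ 2) (D + F * t) (E + 2 * A * t) F := by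
  obtain ⟨h1, h2, h3, x, y, z, h4⟩ := h
  exact ⟨h1, h2, by linear_combination h3, x - t * z, y, z, by linear_combination h4⟩

/-- substitute `y ↦ y + t z` -/
theorem GoodForm.shift_yz {M A B C D E F : ℤ} (h : GoodForm M A B C D E F) (t : ℤ) :
    GoodForm M A B (C + D * t + B * t ^ 2) (D + 2 * B * t) (E + F * t) F := by
  obtain ⟨h1, h2, h3, x, y, z, h4⟩ := h
  exact ⟨h1, h2, by linear_combination h3, x, y - t * z, z, by linear_combination h4⟩

theorem exists_shift_s4 (P R : ℤ) (hP : 0 < P) : ∃ t : ℤ, |2 * (R + P * t)| ≤ P := by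
  refine ⟨-((2 * R + P) / (2 * P)), ?_⟩
  have h1 := Int.mul_ediv_add_emod (2 * R + P) (2 * P)
  have h2 := Int.emod_nonneg (2 * R + P) (by linarith : 2 * P ≠ 0)
  have h3 := Int.emod_lt_of_pos (2 * R + P) (by linarith : 0 < 2 * P)
  rw [abs_le]
  constructor <;> nlinarith

theorem reduced_finish {M A B C D E F : ℤ} (h : GoodForm M A B C D E F)
    (hAB : A ≤ B) (hF : |F| ≤ A) (hE : |E| ≤ A)
    (hPQ : 4 * A * B - F ^ 2 ≤ 4 * A * C - E ^ 2)
    (hR : |2 * (2 * A * D - E * F)| ≤ 4 * A * B - F ^ 2) :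
    ∃ c u v : ℤ, M = c ^ 2 + u ^ 2 + u * v + v ^ 2 := by
  have hk := h.key
  obtain ⟨h1, h2, h3, x, y, z, h4⟩ := h
  have hF2 : F ^ 2 ≤ A ^ 2 := sq_le_sq' (abs_le.mp hF).1 (abs_le.mp hF).2
  have hP : 3 * A ^ 2 ≤ 4 * A * B - F ^ 2 := by nlinarith
  have hR2 : (2 * (2 * A * D - E * F)) ^ 2 ≤ (4 * A * B - F ^ 2) ^ 2 :=
    sq_le_sq' (abs_le.mp hR).1 (abs_le.mp hR).2
  have hP2 : (4 * A * B - F ^ 2) ^ 2 ≤ 16 * A := by nlinarith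
  have hA : A = 1 := by
    by_contra hne
    have hA2 : 2 ≤ A := by omega
    have : (3 * A ^ 2) ^ 2 ≤ (4 * A * B - F ^ 2) ^ 2 := by
      apply pow_le_pow_left₀ (by positivity) hP
    have h8 : A * 8 ≤ A * A ^ 3 := by
      apply mul_le_mul_of_nonneg_left _ h1.le
      have := pow_le_pow_left₀ (by norm_num : (0:ℤ) ≤ 2) hA2 3
      linarith
    nlinarith
  subst hA
  have hP4 : 4 * 1 * B - F ^ 2 ≤ 4 := by nlinarith
  have hB : B = 1 := by
    have : F ^ 2 ≤ 1 := by linarith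
    omega
  subst hB
  rw [abs_le] at hF hE hR
  obtain ⟨hF1, hF2⟩ := hF
  obtain ⟨hE1, hE2⟩ := hE
  obtain ⟨hR1, hR2⟩ := hR
  have hD1 : -2 ≤ D := by nlinarith
  have hD2 : D ≤ 2 := by nlinarith
  interval_cases F <;> interval_cases E <;> interval_cases D <;> first
    | (exfalso; omega)
    | (have hC : C = 1 := by omega
       subst hC
       first
       | exact ⟨z, x, y, by linarith⟩
       | exact ⟨z, x, -y, by linarith⟩
       | exact ⟨y, x, z, by linarith⟩
       | exact ⟨y, x, -z, by linarith⟩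
       | exact ⟨x, y, z, by linarith⟩
       | exact ⟨x, y, -z, by linarith⟩)

theorem goodForm_rep {M A B C D E F : ℤ} (h : GoodForm M A B C D E F) :
    ∃ c u v : ℤ, M = c ^ 2 + u ^ 2 + u * v + v ^ 2 := by
  classical
  have ex1 : ∃ a : ℕ, ∃ B C D E F : ℤ, GoodForm M a B C D E F :=
    ⟨A.toNat, B, C, D, E, F, by rw [Int.toNat_of_nonneg h.1.le]; exact h⟩
  let a := Nat.find ex1
  have ha := Nat.find_spec ex1
  have hmin : ∀ A' B C D E F : ℤ, GoodForm M A' B C D E F → (a : ℤ) ≤ A' := by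
    intro A' B C D E F h'
    have : a ≤ A'.toNat := Nat.find_min' ex1
      ⟨B, C, D, E, F, by rw [Int.toNat_of_nonneg h'.1.le]; exact h'⟩
    have := h'.1
    omega
  have ex2 : ∃ p : ℕ, ∃ B C D E F : ℤ, GoodForm M a B C D E F ∧ 4 * a * B - F ^ 2 = p := by
    obtain ⟨B, C, D, E, F, h'⟩ := ha
    exact ⟨(4 * a * B - F ^ 2).toNat, B, C, D, E, F, h', (Int.toNat_of_nonneg h'.2.1.le).symm⟩
  let p := Nat.find ex2
  have hp := Nat.find_spec ex2
  have hmin2 : ∀ B C D E F : ℤ, GoodForm M a B C D E F → (p : ℤ) ≤ 4 * a * B - F ^ 2 := by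
    intro B C D E F h'
    have : p ≤ (4 * a * B - F ^ 2).toNat := Nat.find_min' ex2
      ⟨B, C, D, E, F, h', (Int.toNat_of_nonneg h'.2.1.le).symm⟩
    have := h'.2.1
    omega
  obtain ⟨B, C, D, E, F, g, hpe⟩ := hp
  change 4 * (a : ℤ) * B - F ^ 2 = (p : ℤ) at hpe
  have ha0 : 0 < (a : ℤ) := g.1
  have hp0 : 0 < (p : ℤ) := hpe ▸ g.2.1
  clear_value a p
  -- shift z
  obtain ⟨t, ht⟩ := exists_shift_s4 (p : ℤ) (2 * a * D - E * F) hp0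
  have g2 := g.shift_yz t
  obtain ⟨s, hs⟩ := exists_shift_s4 (a : ℤ) 0 ha0
  obtain ⟨t1, ht1⟩ : ∃ t1 : ℤ, |F + 2 * a * t1| ≤ a := by
    obtain ⟨t1, ht1⟩ := exists_shift_s4 (2 * a : ℤ) F (by linarith)
    exact ⟨t1, by rw [abs_mul, abs_two] at ht1; linarith⟩
  have g3 := g2.shift_xy t1
  obtain ⟨t2, ht2⟩ : ∃ t2 : ℤ, |(E + F * t) + 2 * a * t2| ≤ a := by
    obtain ⟨t1, ht1⟩ := exists_shift_s4 (2 * a : ℤ) (E + F * t) (by linarith)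
    exact ⟨t1, by rw [abs_mul, abs_two] at ht1; linarith⟩
  have g4 := g3.shift_xz t2
  refine reduced_finish g4 (hmin _ _ _ _ _ _ g4.swap_xy) ht1 ht2 ?_ ?_
  · have := hmin2 _ _ _ _ _ g4.swap_yz
    refine le_trans (le_of_eq ?_) this
    linear_combination hpe
  · have e1 : 4 * (a : ℤ) * (B + F * t1 + a * t1 ^ 2) - (F + 2 * a * t1) ^ 2 = p := by
      linear_combination hpe
    rw [e1]
    convert ht using 2
    linear_combination 2 * t * hpe

theorem exists_rep (M : ℕ) (hM : 0 < M) (h3 : M % 3 = 2) :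
    ∃ c u v : ℤ, (M : ℤ) = c ^ 2 + u ^ 2 + u * v + v ^ 2 := by
  have hcop : IsCoprime (4 * (M : ℤ) - 3) ((48 * M : ℕ) : ℤ) := by
    have c2 : IsCoprime (4 * (M : ℤ) - 3) 2 := ⟨-1, 2 * M - 1, by ring⟩
    have c3 : IsCoprime (4 * (M : ℤ) - 3) 3 := by
      obtain ⟨k, hk⟩ : ∃ k : ℤ, (M : ℤ) = 3 * k + 2 := ⟨M / 3, by omega⟩
      exact ⟨-1, 4 * k + 2, by rw [hk]; ring⟩
    have cM : IsCoprime (4 * (M : ℤ) - 3) M := by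
      obtain ⟨k, hk⟩ : ∃ k : ℤ, (M : ℤ) = 3 * k + 2 := ⟨M / 3, by omega⟩
      exact ⟨-(k + 1), 4 * (k + 1) - 1, by rw [hk]; ring⟩
    have : ((48 * M : ℕ) : ℤ) = 2 ^ 4 * 3 * M := by push_cast; ring
    rw [this]
    exact (c2.pow_right.mul_right c3).mul_right cM
  obtain ⟨p, hp1, hp, hmod⟩ := Nat.forall_exists_prime_gt_and_zmodEq (4 * M) (by omega) hcop
  obtain ⟨k, hk⟩ := hmod.symm.dvd
  have hk0 : 0 ≤ k := by
    by_contra hc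
    push Not at hc
    push_cast at hk
    have : (p : ℤ) > 4 * M := by exact_mod_cast hp1
    nlinarith
  obtain ⟨k, rfl⟩ := Int.eq_ofNat_of_zero_le hk0
  obtain ⟨e, he⟩ : ∃ e : ℕ, e = 12 * k + 1 := ⟨_, rfl⟩
  have hpe : (p : ℤ) = 4 * e * M - 3 := by
    rw [he]; push_cast at hk ⊢; linear_combination hk
  have hp4 : p % 4 = 1 := by
    have : (p : ℤ) = 4 * (e * M) - 3 := by rw [hpe]; ring
    omega
  have hpo : Odd p := Nat.odd_iff.mpr (by omega)
  have heo : Odd e := Nat.odd_iff.mpr (by omega)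
  have hJ : jacobiSym (-(e : ℤ)) p = 1 := by
    rw [jacobiSym.neg _ hpo, ZMod.χ₄_nat_one_mod_four hp4, one_mul,
      jacobiSym.quadratic_reciprocity_one_mod_four (by omega) hpo]
    have : jacobiSym (p : ℤ) e = jacobiSym (-((3 : ℕ) : ℤ)) e := by
      apply jacobiSym.mod_left'
      rw [hpe]
      apply Int.ModEq.symm
      apply (Int.modEq_iff_dvd).mpr
      exact ⟨4 * M, by push_cast; ring⟩
    rw [this, jacobiSym.neg _ heo, ZMod.χ₄_nat_one_mod_four (by omega), one_mul,
      jacobiSym.quadratic_reciprocity_one_mod_four' (by decide) (by omega)]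
    rw [jacobiSym.mod_left]
    have : (e : ℤ) % ((3 : ℕ) : ℤ) = 1 := by push_cast; omega
    rw [this, jacobiSym.one_left]
  have : Fact p.Prime := ⟨hp⟩
  have hsq : IsSquare ((-(e : ℤ) : ℤ) : ZMod p) := ZMod.isSquare_of_jacobiSym_eq_one hJ
  obtain ⟨r, hr⟩ := hsq
  obtain ⟨h, rfl⟩ := ZMod.intCast_surjective r
  have hd : (p : ℤ) ∣ h ^ 2 + e := by
    rw [← ZMod.intCast_zmod_eq_zero_iff_dvd]
    push_cast at hr ⊢
    linear_combination -hr
  obtain ⟨a, ha⟩ := hd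
  have hp0 : 0 < (p : ℤ) := by exact_mod_cast hp.pos
  have he0 : 0 < (e : ℤ) := by omega
  have ha0 : 0 < a := by
    by_contra hc
    push Not at hc
    nlinarith [sq_nonneg h]
  have g : GoodForm (M : ℤ) a p M 0 1 (2 * h) := by
    refine ⟨ha0, by nlinarith, ?_, 0, 0, 1, by ring⟩
    linear_combination (-4 * (M : ℤ)) * ha - hpe
  exact goodForm_rep g

theorem exists_prim_rep (M : ℕ) (hM : 0 < M) (h3 : M % 3 = 2) :
    ∃ c u v : ℤ, (M : ℤ) = c ^ 2 + u ^ 2 + u * v + v ^ 2 ∧ v % 2 = 1 := by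
  induction M using Nat.strong_induction_on with
  | _ M ih =>
  obtain ⟨c, u, v, h⟩ := exists_rep M hM h3
  rcases Int.emod_two_eq_zero_or_one v with hv | hv
  swap
  · exact ⟨c, u, v, h, hv⟩
  rcases Int.emod_two_eq_zero_or_one u with hu | hu
  swap
  · exact ⟨c, v, u, by linarith, hu⟩
  obtain ⟨u, rfl⟩ := Int.dvd_of_emod_eq_zero hu
  obtain ⟨v, rfl⟩ := Int.dvd_of_emod_eq_zero hv
  rcases Int.emod_two_eq_zero_or_one c with hc | hc
  · obtain ⟨c, rfl⟩ := Int.dvd_of_emod_eq_zero hc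
    have h4 : (M : ℤ) = 4 * (c ^ 2 + u ^ 2 + u * v + v ^ 2) := by rw [h]; ring
    obtain ⟨m, hm⟩ : ∃ m : ℕ, M = 4 * m := ⟨M / 4, by omega⟩
    obtain ⟨c', u', v', h', hv'⟩ := ih m (by omega) (by omega) (by omega)
    -- 4m = (2u'+v')² + (2c')² + 3 v'²
    refine ⟨2 * u' + v', 2 * v', 2 * c' - v', ?_, by omega⟩
    rw [hm]; push_cast; rw [h']; ring
  · -- c odd, rotate so that v is even
    have key : ∀ u w : ℤ, (M : ℤ) = c ^ 2 + 4 * (u ^ 2 + u * (2 * w) + (2 * w) ^ 2) →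
        ∃ c u v : ℤ, (M : ℤ) = c ^ 2 + u ^ 2 + u * v + v ^ 2 ∧ v % 2 = 1 := by
      intro u w h
      refine ⟨2 * (u + w), 4 * w, c - 2 * w, ?_, by omega⟩
      rw [h]; ring
    rcases Int.emod_two_eq_zero_or_one v with hv | hv
    · obtain ⟨w, rfl⟩ := Int.dvd_of_emod_eq_zero hv
      exact key u w (by rw [h]; ring)
    rcases Int.emod_two_eq_zero_or_one u with hu | hu
    · obtain ⟨w, rfl⟩ := Int.dvd_of_emod_eq_zero hu
      exact key v w (by rw [h]; ring)
    · obtain ⟨w, hw⟩ : ∃ w, u + v = 2 * w := ⟨(u + v) / 2, by omega⟩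
      refine key (-u) w ?_
      rw [h, ← hw]; ring

theorem exists_p5 (t : ℤ) (h2 : t % 2 = 1) (h3 : t % 3 ≠ 0) :
    ∃ x : ℤ, t ^ 2 = 24 * p5 x + 1 := by
  have main : ∀ x : ℤ, (6 * x - 1) ^ 2 = 24 * p5 x + 1 := by
    intro x
    have hd : (2 : ℤ) ∣ 3 * x ^ 2 - x := by
      rcases Int.even_or_odd' x with ⟨k, rfl | rfl⟩
      · exact ⟨6 * k ^ 2 - k, by ring⟩
      · exact ⟨6 * k ^ 2 + 5 * k + 1, by ring⟩
    have : 2 * p5 x = 3 * x ^ 2 - x := Int.mul_ediv_cancel' hd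
    linear_combination -12 * this
  have : t % 6 = 1 ∨ t % 6 = 5 := by omega
  rcases this with h | h
  · refine ⟨-(t / 6), ?_⟩
    rw [← main]
    have : t = 6 * (t / 6) + 1 := by omega
    generalize t / 6 = q at *
    subst this; ring
  · refine ⟨t / 6 + 1, ?_⟩
    rw [← main]
    have : t = 6 * (t / 6) + 5 := by omega
    generalize t / 6 = q at *
    subst this; ring

theorem sq_mod_three (a : ℤ) :
    (a % 3 = 0 ∧ a ^ 2 % 3 = 0) ∨ (a % 3 ≠ 0 ∧ a ^ 2 % 3 = 1) := by
  have : a % 3 = 0 ∨ a % 3 = 1 ∨ a % 3 = 2 := by omega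
  rcases this with h | h | h <;> simp [h, pow_two, Int.mul_emod]

theorem p5_add_3p5_add_4p5_universal (n : ℕ) :
    ∃ x y z : ℤ, (n : ℤ) = p5 x + 3 * p5 y + 4 * p5 z := by
  obtain ⟨c, u, v, h, hv⟩ := exists_prim_rep (6 * n + 2) (by omega) (by omega)
  push_cast at h
  have fin : ∀ u v : ℤ, (6 * n + 2 : ℤ) = c ^ 2 + u ^ 2 + u * v + v ^ 2 → v % 2 = 1 →
      v % 3 ≠ 0 → ∃ x y z : ℤ, (n : ℤ) = p5 x + 3 * p5 y + 4 * p5 z := by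
    intro u v h hv hv3
    have e : 4 * (6 * n + 2 : ℤ) = 4 * c ^ 2 + (2 * u + v) ^ 2 + 3 * v ^ 2 := by rw [h]; ring
    have hc3 := sq_mod_three c
    have ha3 := sq_mod_three (2 * u + v)
    have hc2 : c % 2 = 1 := by
      rcases Int.emod_two_eq_zero_or_one c with hc | hc
      · exfalso
        have h' : (6 * n + 2 : ℤ) % 2 = (c ^ 2 + u ^ 2 + u * v + v ^ 2) % 2 := by rw [h]
        rcases Int.emod_two_eq_zero_or_one u with hu | hu <;>
          simp [pow_two, Int.add_emod, Int.mul_emod, hc, hu, hv] at h'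
      · exact hc
    obtain ⟨x, hx⟩ := exists_p5 (2 * u + v) (by omega) (by omega)
    obtain ⟨y, hy⟩ := exists_p5 v hv hv3
    obtain ⟨z, hz⟩ := exists_p5 c hc2 (by omega)
    exact ⟨x, y, z, by linarith⟩
  by_cases hv3 : v % 3 = 0
  swap
  · exact fin u v h hv hv3
  have hu3 : u % 3 ≠ 0 := by
    intro hu
    obtain ⟨u, rfl⟩ := Int.dvd_of_emod_eq_zero hu
    obtain ⟨v, rfl⟩ := Int.dvd_of_emod_eq_zero hv3
    have hc3 := sq_mod_three c
    have : (6 * n + 2 : ℤ) = c ^ 2 + 3 * (3 * u ^ 2 + 3 * u * v + 3 * v ^ 2) := by rw [h]; ring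
    omega
  rcases Int.emod_two_eq_zero_or_one u with hu | hu
  · exact fin (-u) (u + v) (by rw [h]; ring) (by omega) (by omega)
  · exact fin v u (by rw [h]; ring) hu hu3
end

section
/- Let w be an integer of the form w = x² + 3y² with x, y ∈ ℤ, and suppose w ≡ 4 (mod 8). Then there exist odd integers u and v such that w = u² + 3v². -/
theorem sq_add_three_sq_of_mod_eight (w x y : ℤ) (hw : w = x ^ 2 + 3 * y ^ 2)
    (hmod : w % 8 = 4) :
    ∃ u v : ℤ, Odd u ∧ Odd v ∧ w = u ^ 2 + 3 * v ^ 2 := by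
  rcases Int.even_or_odd' x with ⟨a, rfl | rfl⟩ <;> rcases Int.even_or_odd' y with ⟨b, rfl | rfl⟩
  · have hab : Odd (a + b) := by
      by_contra h
      rw [Int.not_odd_iff_even] at h
      obtain ⟨c, hc⟩ := h
      obtain rfl : a = c + c - b := by omega
      have h8 : w = 8 * (2 * c ^ 2 - 2 * c * b + 2 * b ^ 2) := by rw [hw]; ring
      omega
    obtain ⟨c, hc⟩ := hab
    refine ⟨a + 3 * b, a - b, ⟨c + b, by omega⟩, ⟨c - b, by omega⟩, ?_⟩
    rw [hw]; ring
  · exfalso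
    have h2 : w = 2 * (2 * a ^ 2 + 6 * b ^ 2 + 6 * b + 1) + 1 := by rw [hw]; ring
    omega
  · exfalso
    have h2 : w = 2 * (2 * a ^ 2 + 2 * a + 6 * b ^ 2) + 1 := by rw [hw]; ring
    omega
  · exact ⟨_, _, ⟨a, rfl⟩, ⟨b, rfl⟩, hw⟩
end

section
/- Let w be an integer of the form w = x² + 3y² where x and y are odd integers and 3 does not divide x. Then there exist integers u and v, each relatively prime to 6, such that w = u² + 3v². -/
lemma gcd_six_aux (u : ℤ) (h2 : u % 2 = 1) (h3 : u % 3 ≠ 0) : Int.gcd u 6 = 1 := by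
  have h : u % 6 = 1 ∨ u % 6 = 5 := by omega
  rw [← Int.gcd_emod]
  rcases h with h | h <;> rw [h] <;> decide

theorem sq_add_three_sq_coprime_six (w x y : ℤ) (hw : w = x ^ 2 + 3 * y ^ 2)
    (hx : Odd x) (hy : Odd y) (h3 : ¬ (3 : ℤ) ∣ x) :
    ∃ u v : ℤ, Int.gcd u 6 = 1 ∧ Int.gcd v 6 = 1 ∧ w = u ^ 2 + 3 * v ^ 2 := by
  rw [Int.odd_iff] at hx hy
  by_cases hy3 : y % 3 = 0
  · by_cases h4 : (x - y) % 4 = 0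
    · obtain ⟨k, hk⟩ : ∃ k, x = y + 4 * k := ⟨(x - y) / 4, by omega⟩
      refine ⟨2 * k - y, y + 2 * k, gcd_six_aux _ (by omega) (by omega),
        gcd_six_aux _ (by omega) (by omega), ?_⟩
      rw [hw, hk]; ring
    · obtain ⟨k, hk⟩ : ∃ k, x = -y + 4 * k := ⟨(x + y) / 4, by omega⟩
      refine ⟨2 * k + y, 2 * k - y, gcd_six_aux _ (by omega) (by omega),
        gcd_six_aux _ (by omega) (by omega), ?_⟩
      rw [hw, hk]; ring
  · exact ⟨x, y, gcd_six_aux _ hx (by omega), gcd_six_aux _ hy hy3, hw⟩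
end
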